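/- arXiv:1808.01922 — 2 statements merged into one kernel-verified Lean document; each statement's English description precedes it below -/
import Mathlib

section
/- Let A be a Hopf algebra over a field k with bijective antipode S, and let P ∈ A be a nonzero idempotent. The following conditions are equivalent: (1) P is a right group-like projection and S(P) = P; (2) P is a right group-like projection and S²(P) = P; (3) P is a right group-like projection and P·S(P) = S(P)·P; (4) P is a left group-like projection and S(P) = P; (5) P is a left group-like projection and S²(P) = P; (6) P is a left group-like projection and P·S(P) = S(P)·P; (7) P is a two-sided group-like projection; (8) Δ(P)(1 ⊗ P) = Δ(P)(P ⊗ 1). -/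
open scoped TensorProduct

noncomputable section

variable (k : Type*) [Field k] {A : Type*} [Ring A] [HopfAlgebra k A]

/-- `P` is a right group-like projection: a nonzero idempotent with
`Δ(P)(1 ⊗ P) = P ⊗ P = (1 ⊗ P)Δ(P)`. -/
def IsRightGroupLikeProjection (P : A) : Prop :=
  P ≠ 0 ∧ P * P = P ∧
    Coalgebra.comul (R := k) P * ((1 : A) ⊗ₜ[k] P) = P ⊗ₜ[k] P ∧
    ((1 : A) ⊗ₜ[k] P) * Coalgebra.comul (R := k) P = P ⊗ₜ[k] P

/-- `P` is a left group-like projection: a nonzero idempotent with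
`Δ(P)(P ⊗ 1) = P ⊗ P = (P ⊗ 1)Δ(P)`. -/
def IsLeftGroupLikeProjection (P : A) : Prop :=
  P ≠ 0 ∧ P * P = P ∧
    Coalgebra.comul (R := k) P * (P ⊗ₜ[k] (1 : A)) = P ⊗ₜ[k] P ∧
    (P ⊗ₜ[k] (1 : A)) * Coalgebra.comul (R := k) P = P ⊗ₜ[k] P

/-- A two-sided group-like projection. -/
def IsTwoSidedGroupLikeProjection (P : A) : Prop :=
  IsRightGroupLikeProjection k P ∧ IsLeftGroupLikeProjection k P

/-- `N_P^l = {x : (1 ⊗ P)Δ(x) = x ⊗ P}`. -/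
def NPlSet (P : A) : Set A :=
  {x : A | ((1 : A) ⊗ₜ[k] P) * Coalgebra.comul (R := k) x = x ⊗ₜ[k] P}

/-- `N_P^r = {x : Δ(x)(1 ⊗ P) = x ⊗ P}`. -/
def NPrSet (P : A) : Set A :=
  {x : A | Coalgebra.comul (R := k) x * ((1 : A) ⊗ₜ[k] P) = x ⊗ₜ[k] P}

/-- `N_P = N_P^l ∩ N_P^r`. -/
def NPSet (P : A) : Set A := NPlSet k P ∩ NPrSet k P

/-- `V_P = {(μ ⊗ id)(Δ(P)) : μ ∈ A*}`, the smallest left coideal containing `P`. -/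
def VPSet (P : A) : Set A :=
  {x : A | ∃ μ : A →ₗ[k] k,
    x = TensorProduct.lid k A ((TensorProduct.map μ LinearMap.id) (Coalgebra.comul (R := k) P))}

/-- A submodule `N ⊆ A` is a left coideal if `Δ(N) ⊆ A ⊗ N`. -/
def IsLeftCoideal (N : Submodule k A) : Prop :=
  ∀ x ∈ N, Coalgebra.comul (R := k) x ∈
    LinearMap.range (TensorProduct.map (LinearMap.id : A →ₗ[k] A) N.subtype)

/-- A subalgebra `N ⊆ A` is a left coideal subalgebra if `Δ(N) ⊆ A ⊗ N`. -/
def IsLeftCoidealSubalgebra (N : Subalgebra k A) : Prop :=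
  IsLeftCoideal k (Subalgebra.toSubmodule N)

section Antipode

open Coalgebra HopfAlgebra LinearMap TensorProduct WithConv
open Algebra.TensorProduct (includeLeft includeRight)

/-- The comultiplication is the convolution product of the two inclusions `A → A ⊗ A`. -/
lemma toConv_comul_eq_includeLeft_mul_includeRight :
    toConv (comul : A →ₗ[k] A ⊗[k] A) =
      toConv (includeLeft : A →ₐ[k] A ⊗[k] A).toLinearMap *
        toConv (includeRight : A →ₐ[k] A ⊗[k] A).toLinearMap := by
  ext a
  rw [(ℛ k a).convMul_apply]
  simp [(ℛ k a).eq]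

/-- Composing with an algebra homomorphism `h`, the antipode gives a left convolution inverse. -/
lemma toConv_algHom_comp_antipode_mul {B : Type*} [Ring B] [Algebra k B] (h : A →ₐ[k] B) :
    toConv (h.toLinearMap ∘ₗ antipode k) * toConv h.toLinearMap = 1 := by
  have := algHom_comp_convMul_distrib h (toConv (antipode k (A := A))) (toConv LinearMap.id)
  rw [antipode_mul_id] at this
  apply ofConv_injective
  refine this.symm.trans ?_
  ext
  simp [LinearMap.convOne_def]

/-- Composing with an algebra homomorphism `h`, the antipode gives a right convolution inverse. -/
lemma toConv_algHom_mul_comp_antipode {B : Type*} [Ring B] [Algebra k B] (h : A →ₐ[k] B) :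
    toConv h.toLinearMap * toConv (h.toLinearMap ∘ₗ antipode k) = 1 := by
  have := algHom_comp_convMul_distrib h (toConv LinearMap.id) (toConv (antipode k (A := A)))
  rw [id_mul_antipode] at this
  apply ofConv_injective
  refine this.symm.trans ?_
  ext
  simp [LinearMap.convOne_def]

variable (A) in
/-- The map `x ⊗ y ↦ S(y) ⊗ S(x)`. -/
def antipodeSwap : A ⊗[k] A →ₗ[k] A ⊗[k] A :=
  TensorProduct.map (antipode k) (antipode k) ∘ₗ (TensorProduct.comm k A A).toLinearMap

@[simp]
lemma antipodeSwap_tmul (x y : A) :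
    antipodeSwap k A (x ⊗ₜ y) = antipode k y ⊗ₜ antipode k x := rfl

lemma antipodeSwap_mul (t u : A ⊗[k] A) :
    antipodeSwap k A (t * u) = antipodeSwap k A u * antipodeSwap k A t := by
  induction t with
  | zero => simp
  | add t₁ t₂ h₁ h₂ => simp only [add_mul, mul_add, map_add, h₁, h₂]
  | tmul x y =>
    induction u with
    | zero => simp
    | add u₁ u₂ h₁ h₂ => simp only [add_mul, mul_add, map_add, h₁, h₂]
    | tmul z w => simp [antipode_mul_antidistrib]

/-- The antipode is anti-comultiplicative. -/
lemma antipodeSwap_comul (a : A) : antipodeSwap k A (comul a) = comul (antipode k a) := by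
  have hswap : toConv (antipodeSwap k A ∘ₗ comul) =
      toConv ((includeRight : A →ₐ[k] A ⊗[k] A).toLinearMap ∘ₗ antipode k) *
        toConv ((includeLeft : A →ₐ[k] A ⊗[k] A).toLinearMap ∘ₗ antipode k) := by
    ext a
    rw [(ℛ k a).convMul_apply]
    simp [← (ℛ k a).eq]
  have hinv : toConv (antipodeSwap k A ∘ₗ comul) * toConv comul = 1 := by
    rw [hswap, toConv_comul_eq_includeLeft_mul_includeRight, mul_assoc,
      ← mul_assoc (toConv (_ ∘ₗ antipode k)) (toConv includeLeft.toLinearMap),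
      toConv_algHom_comp_antipode_mul, one_mul, toConv_algHom_comp_antipode_mul]
  exact congr($(left_inv_eq_right_inv hinv comul_right_inv) a)

lemma mul_antipode_rTensor_comul_mul_one_tmul (a p : A) :
    mul' k A ((antipode k).rTensor A (comul a * (1 ⊗ₜ[k] p))) = counit (R := k) a • p := by
  have (t : A ⊗[k] A) : mul' k A ((antipode k).rTensor A (t * (1 ⊗ₜ[k] p))) =
      mul' k A ((antipode k).rTensor A t) * p := by
    induction t with
    | zero => simp
    | add t₁ t₂ h₁ h₂ => simp only [add_mul, map_add, h₁, h₂]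
    | tmul x y => simp [mul_assoc]
  rw [this, mul_antipode_rTensor_comul_apply, Algebra.smul_def]

lemma mul_antipode_rTensor_comul_mul_tmul_one (a p : A) :
    mul' k A ((antipode k).rTensor A (comul a * (p ⊗ₜ[k] 1))) =
      counit (R := k) a • antipode k p := by
  have (t : A ⊗[k] A) : mul' k A ((antipode k).rTensor A (t * (p ⊗ₜ[k] 1))) =
      antipode k p * mul' k A ((antipode k).rTensor A t) := by
    induction t with
    | zero => simp
    | add t₁ t₂ h₁ h₂ => simp only [add_mul, mul_add, map_add, h₁, h₂]
    | tmul x y => simp [mul_assoc, antipode_mul_antidistrib]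
  rw [this, mul_antipode_rTensor_comul_apply, ← Algebra.commutes, Algebra.smul_def]

lemma mul_antipode_lTensor_one_tmul_mul_comul (a p : A) :
    mul' k A ((antipode k).lTensor A ((1 ⊗ₜ[k] p) * comul a)) =
      counit (R := k) a • antipode k p := by
  have (t : A ⊗[k] A) : mul' k A ((antipode k).lTensor A ((1 ⊗ₜ[k] p) * t)) =
      mul' k A ((antipode k).lTensor A t) * antipode k p := by
    induction t with
    | zero => simp
    | add t₁ t₂ h₁ h₂ => simp only [add_mul, mul_add, map_add, h₁, h₂]
    | tmul x y => simp [mul_assoc, antipode_mul_antidistrib]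
  rw [this, mul_antipode_lTensor_comul_apply, Algebra.smul_def]

lemma mul_antipode_lTensor_tmul_one_mul_comul (a p : A) :
    mul' k A ((antipode k).lTensor A ((p ⊗ₜ[k] 1) * comul a)) = counit (R := k) a • p := by
  have (t : A ⊗[k] A) : mul' k A ((antipode k).lTensor A ((p ⊗ₜ[k] 1) * t)) =
      p * mul' k A ((antipode k).lTensor A t) := by
    induction t with
    | zero => simp
    | add t₁ t₂ h₁ h₂ => simp only [mul_add, map_add, h₁, h₂]
    | tmul x y => simp [mul_assoc]
  rw [this, mul_antipode_lTensor_comul_apply, ← Algebra.commutes, Algebra.smul_def]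

variable (A) in
/-- The Galois map `x ⊗ y ↦ Δ(x)(1 ⊗ y)`. -/
def galoisMap : A ⊗[k] A →ₗ[k] A ⊗[k] A :=
  mul' k (A ⊗[k] A) ∘ₗ
    TensorProduct.map comul (includeRight : A →ₐ[k] A ⊗[k] A).toLinearMap

@[simp]
lemma galoisMap_tmul (x y : A) : galoisMap k A (x ⊗ₜ y) = comul x * (1 ⊗ₜ[k] y) := rfl

lemma galoisMap_tmul_one_mul (p : A) (t : A ⊗[k] A) :
    galoisMap k A ((p ⊗ₜ[k] 1) * t) = comul p * galoisMap k A t := by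
  induction t with
  | zero => simp
  | add t₁ t₂ h₁ h₂ => simp only [mul_add, map_add, h₁, h₂]
  | tmul x y => simp [mul_assoc]

lemma galoisMap_mul_one_tmul (p : A) (t : A ⊗[k] A) :
    galoisMap k A (t * (1 ⊗ₜ[k] p)) = galoisMap k A t * (1 ⊗ₜ[k] p) := by
  induction t with
  | zero => simp
  | add t₁ t₂ h₁ h₂ => simp only [add_mul, map_add, h₁, h₂]
  | tmul x y => simp [mul_assoc]

/-- The Galois map sends `a₁ ⊗ S(a₂)` to `a ⊗ 1`. -/
lemma galoisMap_lTensor_antipode_comul (a : A) :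
    galoisMap k A ((antipode k).lTensor A (comul a)) = a ⊗ₜ[k] 1 := by
  have h : toConv (comul : A →ₗ[k] A ⊗[k] A) *
      toConv ((includeRight : A →ₐ[k] A ⊗[k] A).toLinearMap ∘ₗ antipode k) =
        toConv (includeLeft : A →ₐ[k] A ⊗[k] A).toLinearMap := by
    rw [toConv_comul_eq_includeLeft_mul_includeRight, mul_assoc,
      toConv_algHom_mul_comp_antipode, mul_one]
  have ha := congr($h a)
  rw [(ℛ k a).convMul_apply] at ha
  simpa [← (ℛ k a).eq] using ha

lemma lTensor_antipode_one_tmul_mul (p : A) (t : A ⊗[k] A) :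
    (antipode k).lTensor A ((1 ⊗ₜ[k] p) * t) =
      (antipode k).lTensor A t * (1 ⊗ₜ[k] antipode k p) := by
  induction t with
  | zero => simp
  | add t₁ t₂ h₁ h₂ => simp only [add_mul, mul_add, map_add, h₁, h₂]
  | tmul x y => simp [antipode_mul_antidistrib]

lemma lTensor_antipode_tmul_one_mul (p : A) (t : A ⊗[k] A) :
    (antipode k).lTensor A ((p ⊗ₜ[k] 1) * t) = (p ⊗ₜ[k] 1) * (antipode k).lTensor A t := by
  induction t with
  | zero => simp
  | add t₁ t₂ h₁ h₂ => simp only [mul_add, map_add, h₁, h₂]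
  | tmul x y => simp

end Antipode

section GroupLikeProjection

open Coalgebra HopfAlgebra LinearMap

variable {k} {P : A}

lemma scalar_eq_one_of_smul_eq_self {c : k} (hP : P ≠ 0) (h : c • P = P) : c = 1 :=
  smul_left_injective k hP (by simpa using h)

lemma lid_rTensor_counit_comul_mul_one_tmul (a p : A) :
    TensorProduct.lid k A ((counit (R := k)).rTensor A (comul a * (1 ⊗ₜ[k] p))) = a * p := by
  have (t : A ⊗[k] A) :
      TensorProduct.lid k A ((counit (R := k)).rTensor A (t * (1 ⊗ₜ[k] p))) =
        TensorProduct.lid k A ((counit (R := k)).rTensor A t) * p := by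
    induction t with
    | zero => simp
    | add t₁ t₂ h₁ h₂ => simp only [add_mul, map_add, h₁, h₂]
    | tmul x y => simp
  rw [this, rTensor_counit_comul, TensorProduct.lid_tmul, one_smul]

lemma lid_rTensor_counit_comul_mul_tmul_one (a p : A) :
    TensorProduct.lid k A ((counit (R := k)).rTensor A (comul a * (p ⊗ₜ[k] 1))) =
      counit (R := k) p • a := by
  have (t : A ⊗[k] A) :
      TensorProduct.lid k A ((counit (R := k)).rTensor A (t * (p ⊗ₜ[k] 1))) =
        counit (R := k) p • TensorProduct.lid k A ((counit (R := k)).rTensor A t) := by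
    induction t with
    | zero => simp
    | add t₁ t₂ h₁ h₂ => simp only [add_mul, smul_add, map_add, h₁, h₂]
    | tmul x y => simp [mul_comm, mul_smul]
  rw [this, rTensor_counit_comul, TensorProduct.lid_tmul, one_smul]

lemma rid_lTensor_counit_comul_mul_tmul_one (a p : A) :
    TensorProduct.rid k A ((counit (R := k)).lTensor A (comul a * (p ⊗ₜ[k] 1))) = a * p := by
  have (t : A ⊗[k] A) :
      TensorProduct.rid k A ((counit (R := k)).lTensor A (t * (p ⊗ₜ[k] 1))) =
        TensorProduct.rid k A ((counit (R := k)).lTensor A t) * p := by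
    induction t with
    | zero => simp
    | add t₁ t₂ h₁ h₂ => simp only [add_mul, map_add, h₁, h₂]
    | tmul x y => simp
  rw [this, lTensor_counit_comul, TensorProduct.rid_tmul, one_smul]

namespace IsRightGroupLikeProjection

lemma counit_eq_one (h : IsRightGroupLikeProjection k P) : counit (R := k) P = 1 := by
  refine scalar_eq_one_of_smul_eq_self h.1 ?_
  have := lid_rTensor_counit_comul_mul_one_tmul (k := k) P P
  rwa [h.2.2.1, h.2.1, rTensor_tmul, TensorProduct.lid_tmul] at this

lemma antipode_mul_self (h : IsRightGroupLikeProjection k P) : antipode k P * P = P := by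
  have := mul_antipode_rTensor_comul_mul_one_tmul k P P
  simpa [h.2.2.1, h.counit_eq_one] using this

lemma self_mul_antipode (h : IsRightGroupLikeProjection k P) :
    P * antipode k P = antipode k P := by
  have := mul_antipode_lTensor_one_tmul_mul_comul k P P
  simpa [h.2.2.2, h.counit_eq_one] using this

lemma isLeftGroupLikeProjection (h : IsRightGroupLikeProjection k P) (hS : antipode k P = P) :
    IsLeftGroupLikeProjection k P := by
  refine ⟨h.1, h.2.1, ?_, ?_⟩
  · simpa [antipodeSwap_mul, antipodeSwap_comul, hS] using congr(antipodeSwap k A $(h.2.2.2))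
  · simpa [antipodeSwap_mul, antipodeSwap_comul, hS] using congr(antipodeSwap k A $(h.2.2.1))

end IsRightGroupLikeProjection

namespace IsLeftGroupLikeProjection

lemma counit_eq_one (h : IsLeftGroupLikeProjection k P) : counit (R := k) P = 1 := by
  refine scalar_eq_one_of_smul_eq_self h.1 ?_
  have := rid_lTensor_counit_comul_mul_tmul_one (k := k) P P
  rwa [h.2.2.1, h.2.1, lTensor_tmul, TensorProduct.rid_tmul] at this

lemma self_mul_antipode (h : IsLeftGroupLikeProjection k P) : P * antipode k P = P := by
  have := mul_antipode_lTensor_tmul_one_mul_comul k P P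
  simpa [h.2.2.2, h.counit_eq_one] using this

lemma antipode_mul_self (h : IsLeftGroupLikeProjection k P) :
    antipode k P * P = antipode k P := by
  have := mul_antipode_rTensor_comul_mul_tmul_one k P P
  simpa [h.2.2.1, h.counit_eq_one] using this

lemma isRightGroupLikeProjection (h : IsLeftGroupLikeProjection k P) (hS : antipode k P = P) :
    IsRightGroupLikeProjection k P := by
  refine ⟨h.1, h.2.1, ?_, ?_⟩
  · simpa [antipodeSwap_mul, antipodeSwap_comul, hS] using congr(antipodeSwap k A $(h.2.2.2))
  · simpa [antipodeSwap_mul, antipodeSwap_comul, hS] using congr(antipodeSwap k A $(h.2.2.1))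

end IsLeftGroupLikeProjection

/-- If `Δ(P)(1 ⊗ P) = Δ(P)(P ⊗ 1)` then `S(P) = P`. -/
lemma antipode_eq_self_of_comul_mul_eq (hP0 : P ≠ 0) (hP2 : P * P = P)
    (h : comul (R := k) P * (1 ⊗ₜ[k] P) = comul (R := k) P * (P ⊗ₜ[k] 1)) :
    antipode k P = P := by
  have hε : counit (R := k) P = 1 := by
    refine scalar_eq_one_of_smul_eq_self hP0 ?_
    rw [← lid_rTensor_counit_comul_mul_tmul_one, ← h, lid_rTensor_counit_comul_mul_one_tmul, hP2]
  have := mul_antipode_rTensor_comul_mul_tmul_one k P P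
  rw [← h, mul_antipode_rTensor_comul_mul_one_tmul, hε, one_smul, one_smul] at this
  exact this.symm

lemma isTwoSidedGroupLikeProjection_of_comul_mul_eq (hP0 : P ≠ 0) (hP2 : P * P = P)
    (h : comul (R := k) P * (1 ⊗ₜ[k] P) = comul (R := k) P * (P ⊗ₜ[k] 1)) :
    IsTwoSidedGroupLikeProjection k P := by
  have hS := antipode_eq_self_of_comul_mul_eq hP0 hP2 h
  have h' : (P ⊗ₜ[k] 1) * comul (R := k) P = (1 ⊗ₜ[k] P) * comul (R := k) P := by
    simpa [antipodeSwap_mul, antipodeSwap_comul, hS] using congr(antipodeSwap k A $h)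
  have key : comul (R := k) P * (P ⊗ₜ[k] 1) = P ⊗ₜ[k] P := by
    have := congr(galoisMap k A ((HopfAlgebra.antipode k).lTensor A $h'))
    simpa [lTensor_antipode_tmul_one_mul, lTensor_antipode_one_tmul_mul, hS,
      galoisMap_tmul_one_mul, galoisMap_mul_one_tmul, galoisMap_lTensor_antipode_comul] using this
  have key' : (1 ⊗ₜ[k] P) * comul (R := k) P = P ⊗ₜ[k] P := by
    simpa [antipodeSwap_mul, antipodeSwap_comul, hS] using congr(antipodeSwap k A $key)
  exact ⟨⟨hP0, hP2, h.trans key, key'⟩, ⟨hP0, hP2, key, h'.trans key'⟩⟩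

end GroupLikeProjection

/-- Theorem (equivalent conditions for a nonzero idempotent in a Hopf algebra with
bijective antipode to be a two-sided group-like projection). -/
theorem statement0
    (hS : Function.Bijective (HopfAlgebra.antipode (R := k) : A →ₗ[k] A))
    (P : A) (hP0 : P ≠ 0) (hP2 : P * P = P) :
    List.TFAE [
      IsRightGroupLikeProjection k P ∧ HopfAlgebra.antipode (R := k) P = P,
      IsRightGroupLikeProjection k P ∧
        HopfAlgebra.antipode (R := k) (HopfAlgebra.antipode (R := k) P) = P,
      IsRightGroupLikeProjection k P ∧
        P * HopfAlgebra.antipode (R := k) P = HopfAlgebra.antipode (R := k) P * P,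
      IsLeftGroupLikeProjection k P ∧ HopfAlgebra.antipode (R := k) P = P,
      IsLeftGroupLikeProjection k P ∧
        HopfAlgebra.antipode (R := k) (HopfAlgebra.antipode (R := k) P) = P,
      IsLeftGroupLikeProjection k P ∧
        P * HopfAlgebra.antipode (R := k) P = HopfAlgebra.antipode (R := k) P * P,
      IsTwoSidedGroupLikeProjection k P,
      Coalgebra.comul (R := k) P * ((1 : A) ⊗ₜ[k] P) =
        Coalgebra.comul (R := k) P * (P ⊗ₜ[k] (1 : A))] := by
  tfae_have 1 → 2 := fun ⟨h, hS⟩ ↦ ⟨h, by rw [hS, hS]⟩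
  tfae_have 2 → 1 := fun ⟨h, hS⟩ ↦ ⟨h, by
    have := congr(HopfAlgebra.antipode k $(h.antipode_mul_self))
    rwa [HopfAlgebra.antipode_mul_antidistrib, hS, h.antipode_mul_self, eq_comm] at this⟩
  tfae_have 1 → 3 := fun ⟨h, hS⟩ ↦ ⟨h, by rw [hS]⟩
  tfae_have 3 → 1 := fun ⟨h, hS⟩ ↦ ⟨h, by
    rwa [h.self_mul_antipode, h.antipode_mul_self] at hS⟩
  tfae_have 4 → 5 := fun ⟨h, hS⟩ ↦ ⟨h, by rw [hS, hS]⟩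
  tfae_have 5 → 4 := fun ⟨h, hS⟩ ↦ ⟨h, by
    have := congr(HopfAlgebra.antipode k $(h.self_mul_antipode))
    rwa [HopfAlgebra.antipode_mul_antidistrib, hS, h.self_mul_antipode, eq_comm] at this⟩
  tfae_have 4 → 6 := fun ⟨h, hS⟩ ↦ ⟨h, by rw [hS]⟩
  tfae_have 6 → 4 := fun ⟨h, hS⟩ ↦ ⟨h, by
    rwa [h.self_mul_antipode, h.antipode_mul_self, eq_comm] at hS⟩
  tfae_have 1 → 7 := fun ⟨h, hS⟩ ↦ ⟨h, h.isLeftGroupLikeProjection hS⟩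
  tfae_have 4 → 7 := fun ⟨h, hS⟩ ↦ ⟨h.isRightGroupLikeProjection hS, h⟩
  tfae_have 7 → 1 := fun ⟨hr, hl⟩ ↦
    ⟨hr, hr.self_mul_antipode.symm.trans hl.self_mul_antipode⟩
  tfae_have 7 → 4 := fun ⟨hr, hl⟩ ↦
    ⟨hl, hr.self_mul_antipode.symm.trans hl.self_mul_antipode⟩
  tfae_have 7 → 8 := fun ⟨hr, hl⟩ ↦ hr.2.2.1.trans hl.2.2.1.symm
  tfae_have 8 → 7 := isTwoSidedGroupLikeProjection_of_comul_mul_eq hP0 hP2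
  tfae_finish
end
end

section
/- Let A be a Hopf algebra over a field k with bijective antipode S. The correspondence P ↦ N_P is a bijection between the set of two-sided group-like projections in A and the set of semisimple left coideal subalgebras N ⊆ A satisfying S²(N) = N. -/
open scoped TensorProduct

noncomputable section

variable (k : Type*) [Field k] {A : Type*} [Ring A] [HopfAlgebra k A]

/-- If `f` and `g` are convolution inverse, then `f(x₁)g(x₂) ⊗ x₃ = 1 ⊗ x`. -/
lemma mul_map_includeLeft_comul (f g : A →ₗ[k] A)
    (h : LinearMap.mul' k A ∘ₗ TensorProduct.map f g ∘ₗ Coalgebra.comul =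
      Algebra.linearMap k A ∘ₗ Coalgebra.counit) (x : A) :
    LinearMap.mul' k (A ⊗[k] A)
      (TensorProduct.map (Algebra.TensorProduct.includeLeft.toLinearMap ∘ₗ f)
        (g.rTensor A ∘ₗ Coalgebra.comul) (Coalgebra.comul (R := k) x)) = 1 ⊗ₜ[k] x := by
  set K : A ⊗[k] (A ⊗[k] A) →ₗ[k] A ⊗[k] A :=
    LinearMap.mul' k (A ⊗[k] A) ∘ₗ
      TensorProduct.map (Algebra.TensorProduct.includeLeft.toLinearMap ∘ₗ f) (g.rTensor A) with hK
  have h₁ : LinearMap.mul' k (A ⊗[k] A) ∘ₗ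
      TensorProduct.map (Algebra.TensorProduct.includeLeft.toLinearMap ∘ₗ f)
        (g.rTensor A ∘ₗ Coalgebra.comul) = K ∘ₗ Coalgebra.comul.lTensor A := by
    ext; simp [hK]
  have h₂ : K ∘ₗ (TensorProduct.assoc k A A A).toLinearMap =
      (LinearMap.mul' k A ∘ₗ TensorProduct.map f g).rTensor A := by
    ext; simp [hK]
  calc _ = K (Coalgebra.comul.lTensor A (Coalgebra.comul x)) := LinearMap.congr_fun h₁ _
    _ = (LinearMap.mul' k A ∘ₗ TensorProduct.map f g).rTensor A
          (Coalgebra.comul.rTensor A (Coalgebra.comul x)) := by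
      rw [← Coalgebra.coassoc_apply, ← h₂]; rfl
    _ = (Algebra.linearMap k A).rTensor A
          (Coalgebra.counit.rTensor A (Coalgebra.comul x)) := by
      rw [← LinearMap.rTensor_comp_apply, ← LinearMap.rTensor_comp_apply, LinearMap.comp_assoc, h]
    _ = 1 ⊗ₜ[k] x := by simp

/-- `x₁ ⊗ x₂S(x₃) = x ⊗ 1`. -/
lemma mul_map_comul_includeRight_antipode (x : A) :
    LinearMap.mul' k (A ⊗[k] A)
      (TensorProduct.map Coalgebra.comul
        (Algebra.TensorProduct.includeRight.toLinearMap ∘ₗ HopfAlgebra.antipode k)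
        (Coalgebra.comul (R := k) x)) = x ⊗ₜ[k] 1 := by
  set K : (A ⊗[k] A) ⊗[k] A →ₗ[k] A ⊗[k] A :=
    LinearMap.mul' k (A ⊗[k] A) ∘ₗ TensorProduct.map LinearMap.id
      (Algebra.TensorProduct.includeRight.toLinearMap ∘ₗ HopfAlgebra.antipode k) with hK
  have h₁ : LinearMap.mul' k (A ⊗[k] A) ∘ₗ TensorProduct.map Coalgebra.comul
      (Algebra.TensorProduct.includeRight.toLinearMap ∘ₗ HopfAlgebra.antipode k) =
      K ∘ₗ Coalgebra.comul.rTensor A := by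
    ext; simp [hK]
  have h₂ : K ∘ₗ (TensorProduct.assoc k A A A).symm.toLinearMap =
      (LinearMap.mul' k A ∘ₗ (HopfAlgebra.antipode k).lTensor A).lTensor A := by
    ext; simp [hK]
  calc _ = K (Coalgebra.comul.rTensor A (Coalgebra.comul x)) := LinearMap.congr_fun h₁ _
    _ = (LinearMap.mul' k A ∘ₗ (HopfAlgebra.antipode k).lTensor A).lTensor A
          (Coalgebra.comul.lTensor A (Coalgebra.comul x)) := by
      rw [← Coalgebra.coassoc_symm_apply, ← h₂]; rfl
    _ = (Algebra.linearMap k A).lTensor A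
          (Coalgebra.counit.lTensor A (Coalgebra.comul x)) := by
      rw [← LinearMap.lTensor_comp_apply, ← LinearMap.lTensor_comp_apply, LinearMap.comp_assoc,
        HopfAlgebra.mul_antipode_lTensor_comul]
    _ = x ⊗ₜ[k] 1 := by simp

open WithConv in
/-- The antipode is an anti-coalgebra map. -/
lemma comul_antipode (x : A) :
    Coalgebra.comul (R := k) (HopfAlgebra.antipode k x) =
      TensorProduct.comm k A A (TensorProduct.map (HopfAlgebra.antipode k)
        (HopfAlgebra.antipode k) (Coalgebra.comul (R := k) x)) := by
  set S : A →ₗ[k] A := HopfAlgebra.antipode k with hS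
  set G : A →ₗ[k] A ⊗[k] A :=
    (TensorProduct.comm k A A).toLinearMap ∘ₗ TensorProduct.map S S ∘ₗ Coalgebra.comul with hG
  suffices h : toConv G * toConv (Coalgebra.comul (R := k) (A := A)) = 1 by
    have := left_inv_eq_right_inv h (LinearMap.comul_right_inv (R := k) (C := A))
    exact (LinearMap.congr_fun (WithConv.toConv_injective this) x).symm
  ext x
  rw [LinearMap.convMul_apply, LinearMap.convOne_apply]
  set K : A ⊗[k] (A ⊗[k] A) →ₗ[k] A ⊗[k] A :=
    LinearMap.mul' k (A ⊗[k] A) ∘ₗ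
      TensorProduct.map (Algebra.TensorProduct.includeRight.toLinearMap ∘ₗ S)
        (LinearMap.mul' k (A ⊗[k] A) ∘ₗ
          TensorProduct.map (Algebra.TensorProduct.includeLeft.toLinearMap ∘ₗ S)
            Coalgebra.comul) with hK
  have h₁ : LinearMap.mul' k (A ⊗[k] A) ∘ₗ TensorProduct.map G Coalgebra.comul =
      K ∘ₗ (TensorProduct.assoc k A A A).toLinearMap ∘ₗ Coalgebra.comul.rTensor A := by
    have : LinearMap.mul' k (A ⊗[k] A) ∘ₗ TensorProduct.map
        ((TensorProduct.comm k A A).toLinearMap ∘ₗ TensorProduct.map S S) Coalgebra.comul =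
        K ∘ₗ (TensorProduct.assoc k A A A).toLinearMap := by
      apply TensorProduct.ext_threefold
      intro a b c
      simp [hK, ← mul_assoc]
    rw [← LinearMap.comp_assoc, ← this, LinearMap.comp_assoc, LinearMap.rTensor,
      ← TensorProduct.map_comp, LinearMap.comp_id, LinearMap.comp_assoc]
  have h₂ : K ∘ₗ Coalgebra.comul.lTensor A =
      Algebra.TensorProduct.includeRight.toLinearMap ∘ₗ LinearMap.mul' k A ∘ₗ S.rTensor A := by
    ext a b
    have := mul_map_includeLeft_comul k S LinearMap.id
      (HopfAlgebra.mul_antipode_rTensor_comul (R := k) (A := A)) b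
    rw [LinearMap.rTensor_id, LinearMap.id_comp] at this
    simp at this
    simp [hK, this]
  calc _ = K (Coalgebra.comul.lTensor A (Coalgebra.comul x)) := by
        rw [← Coalgebra.coassoc_apply]; exact LinearMap.congr_fun h₁ _
    _ = _ := by
      refine (LinearMap.congr_fun h₂ _).trans ?_
      simp [hS, Algebra.algebraMap_eq_smul_one, Algebra.TensorProduct.one_def]

/-- `S(P₁) ⊗ P₂` is a Casimir element for `N_P^l`. -/
lemma tmul_one_mul_antipode_comul {P x : A} (hx : x ∈ NPlSet k P) :
    (x ⊗ₜ[k] (1 : A)) * (HopfAlgebra.antipode k).rTensor A (Coalgebra.comul (R := k) P) =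
      (HopfAlgebra.antipode k).rTensor A (Coalgebra.comul (R := k) P) * ((1 : A) ⊗ₜ[k] x) := by
  set S : A →ₗ[k] A := HopfAlgebra.antipode k with hS
  set Φ : A ⊗[k] A →ₗ[k] A ⊗[k] A := LinearMap.mul' k (A ⊗[k] A) ∘ₗ
      TensorProduct.map (Algebra.TensorProduct.includeLeft.toLinearMap ∘ₗ LinearMap.id)
        (S.rTensor A ∘ₗ Coalgebra.comul) with hΦ
  have hΦx : Φ (Coalgebra.comul x) = 1 ⊗ₜ[k] x :=
    mul_map_includeLeft_comul k LinearMap.id S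
      (HopfAlgebra.mul_antipode_lTensor_comul (R := k) (A := A)) x
  set Ψ : A ⊗[k] A →ₗ[k] A ⊗[k] A →ₗ[k] A ⊗[k] A :=
    TensorProduct.homTensorHomMap (.id k) A A A A ∘ₗ
      TensorProduct.map ((LinearMap.mul k A).flip ∘ₗ S) (LinearMap.mul k A) with hΨ
  have key : ∀ (a : A) (u v : A ⊗[k] A),
      (a ⊗ₜ[k] (1 : A)) * S.rTensor A (u * v) = Ψ u ((a ⊗ₜ[k] (1 : A)) * S.rTensor A v) := by
    intro a u v
    induction u with
    | zero => simp
    | add u₁ u₂ h₁ h₂ => simp only [add_mul, map_add, mul_add, LinearMap.add_apply, h₁, h₂]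
    | tmul p q =>
      induction v with
      | zero => simp
      | add v₁ v₂ h₁ h₂ => simp only [map_add, mul_add, h₁, h₂]
      | tmul c d => simp [hΨ, hS, HopfAlgebra.antipode_mul_antidistrib, mul_assoc]
  have hΦP : ∀ t, Φ (((1 : A) ⊗ₜ[k] P) * t) = Ψ (Coalgebra.comul P) (Φ t) := by
    intro t
    induction t with
    | zero => simp
    | add u₁ u₂ h₁ h₂ => simp only [mul_add, map_add, h₁, h₂]
    | tmul a b => simpa [hΦ] using key a (Coalgebra.comul P) (Coalgebra.comul b)
  have hΨx : ∀ u, Ψ u ((1 : A) ⊗ₜ[k] x) = S.rTensor A u * ((1 : A) ⊗ₜ[k] x) := by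
    intro u
    induction u with
    | zero => simp
    | add u₁ u₂ h₁ h₂ => simp only [add_mul, map_add, LinearMap.add_apply, h₁, h₂]
    | tmul p q => simp [hΨ]
  have := congrArg Φ hx
  rw [hΦP, hΦx, hΨx] at this
  rw [this]
  simp [hΦ]

/-- `ε ⊗ id` as an algebra homomorphism. -/
def counitLeft : A ⊗[k] A →ₐ[k] A :=
  (Algebra.TensorProduct.lid k A).toAlgHom.comp
    (Algebra.TensorProduct.map (Bialgebra.counitAlgHom k A) (AlgHom.id k A))

/-- `id ⊗ ε` as an algebra homomorphism. -/
def counitRight : A ⊗[k] A →ₐ[k] A :=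
  (Algebra.TensorProduct.rid k k A).toAlgHom.comp
    (Algebra.TensorProduct.map (AlgHom.id k A) (Bialgebra.counitAlgHom k A))

@[simp]
lemma counitLeft_tmul (a b : A) :
    counitLeft k (a ⊗ₜ[k] b) = Coalgebra.counit (R := k) a • b := by
  simp [counitLeft]

@[simp]
lemma counitRight_tmul (a b : A) :
    counitRight k (a ⊗ₜ[k] b) = Coalgebra.counit (R := k) b • a := by
  simp [counitRight]

@[simp]
lemma counitLeft_comul (x : A) : counitLeft k (Coalgebra.comul (R := k) x) = x := by
  have h : (counitLeft k (A := A)).toLinearMap =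
      (TensorProduct.lid k A).toLinearMap ∘ₗ Coalgebra.counit.rTensor A := by
    ext; simp
  refine (LinearMap.congr_fun h _).trans ?_
  simp

@[simp]
lemma counitRight_comul (x : A) : counitRight k (Coalgebra.comul (R := k) x) = x := by
  have h : (counitRight k (A := A)).toLinearMap =
      (TensorProduct.rid k A).toLinearMap ∘ₗ Coalgebra.counit.lTensor A := by
    ext; simp
  refine (LinearMap.congr_fun h _).trans ?_
  simp

variable {k}

lemma IsRightGroupLikeProjection.counit_eq_one_s1 {P : A} (hP : IsRightGroupLikeProjection k P) :
    Coalgebra.counit (R := k) P = 1 := by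
  have h := congrArg (counitLeft k) hP.2.2.1
  exact smul_left_injective k hP.1 (by simpa [hP.2.1] using h.symm)

lemma mul_eq_counit_smul_of_mem_NPrSet {P x : A} (hx : x ∈ NPrSet k P) :
    x * P = Coalgebra.counit (R := k) x • P := by
  simpa using congrArg (counitLeft k) hx

lemma mul_eq_counit_smul_of_mem_NPlSet {P x : A} (hx : x ∈ NPlSet k P) :
    P * x = Coalgebra.counit (R := k) x • P := by
  simpa using congrArg (counitLeft k) hx

lemma IsRightGroupLikeProjection.mul_antipode {P : A} (hP : IsRightGroupLikeProjection k P) :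
    P * HopfAlgebra.antipode k P = HopfAlgebra.antipode k P := by
  have h := tmul_one_mul_antipode_comul k (P := P) (x := P) hP.2.2.2
  have hr : ∀ u : A ⊗[k] A, (HopfAlgebra.antipode k).rTensor A u * ((1 : A) ⊗ₜ[k] P) =
      (HopfAlgebra.antipode k).rTensor A (u * ((1 : A) ⊗ₜ[k] P)) := by
    intro u
    induction u with
    | zero => simp
    | add u₁ u₂ h₁ h₂ => simp only [map_add, add_mul, h₁, h₂]
    | tmul a b => simp
  have hc : ∀ u : A ⊗[k] A, counitRight k ((HopfAlgebra.antipode k).rTensor A u) =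
      HopfAlgebra.antipode k (counitRight k u) := by
    intro u
    induction u with
    | zero => simp
    | add u₁ u₂ h₁ h₂ => simp only [map_add, h₁, h₂]
    | tmul a b => simp
  rw [hr, hP.2.2.1] at h
  simpa [hc, hP.counit_eq_one_s1] using congrArg (counitRight k) h

lemma IsLeftGroupLikeProjection.mul_antipode {P : A} (hP : IsLeftGroupLikeProjection k P) :
    P * HopfAlgebra.antipode k P = P := by
  set Φ : A ⊗[k] A →ₗ[k] A ⊗[k] A := LinearMap.mul' k (A ⊗[k] A) ∘ₗ
    TensorProduct.map Coalgebra.comul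
      (Algebra.TensorProduct.includeRight.toLinearMap ∘ₗ HopfAlgebra.antipode k) with hΦ
  have hΦP : ∀ t, Φ ((P ⊗ₜ[k] (1 : A)) * t) = Coalgebra.comul P * Φ t := by
    intro t
    induction t with
    | zero => simp
    | add u₁ u₂ h₁ h₂ => simp only [mul_add, map_add, h₁, h₂]
    | tmul a b => simp [hΦ, mul_assoc]
  have h := congrArg Φ hP.2.2.2
  have hc : Φ (Coalgebra.comul P) = P ⊗ₜ[k] 1 := mul_map_comul_includeRight_antipode k P
  rw [hΦP, hc, hP.2.2.1] at h
  have h := congrArg (counitLeft k) h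
  have hε : Coalgebra.counit (R := k) P = 1 := by
    have h := congrArg (counitRight k) hP.2.2.1
    exact smul_left_injective k hP.1 (by simpa [hP.2.1] using h.symm)
  simpa [hΦ, hε] using h.symm

lemma IsTwoSidedGroupLikeProjection.antipode_eq {P : A} (hP : IsTwoSidedGroupLikeProjection k P) :
    HopfAlgebra.antipode k P = P := by
  rw [← hP.1.mul_antipode, hP.2.mul_antipode]

/-- A right group-like projection fixed by the antipode is two-sided. -/
lemma IsRightGroupLikeProjection.isTwoSided {P : A} (hP : IsRightGroupLikeProjection k P)
    (hSP : HopfAlgebra.antipode k P = P) : IsTwoSidedGroupLikeProjection k P := by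
  set σ : A ⊗[k] A →ₗ[k] A ⊗[k] A := (TensorProduct.comm k A A).toLinearMap ∘ₗ
    TensorProduct.map (HopfAlgebra.antipode k) (HopfAlgebra.antipode k) with hσ
  have hσ_mul : ∀ u v, σ (u * v) = σ v * σ u := by
    intro u v
    induction u with
    | zero => simp
    | add u₁ u₂ h₁ h₂ => simp only [map_add, add_mul, mul_add, h₁, h₂]
    | tmul a b =>
      induction v with
      | zero => simp
      | add v₁ v₂ h₁ h₂ => simp only [map_add, add_mul, mul_add, h₁, h₂]
      | tmul c d => simp [hσ, HopfAlgebra.antipode_mul_antidistrib]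
  have hσP : σ (Coalgebra.comul P) = Coalgebra.comul P := by
    have := comul_antipode k P
    rw [hSP] at this
    exact this.symm
  refine ⟨hP, hP.1, hP.2.1, ?_, ?_⟩
  · have h := congrArg σ hP.2.2.2
    rw [hσ_mul, hσP] at h
    simpa [hσ, hSP] using h
  · have h := congrArg σ hP.2.2.1
    rw [hσ_mul, hσP] at h
    simpa [hσ, hSP] using h

/-- A separable algebra over a field is semisimple. -/
lemma isSemisimpleRing_of_casimir {B : Type*} [Ring B] [Algebra k B] (e : B ⊗[k] B)
    (he : ∀ x : B, (x ⊗ₜ[k] (1 : B)) * e = e * ((1 : B) ⊗ₜ[k] x))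
    (he1 : LinearMap.mul' k B e = 1) : IsSemisimpleRing B := by
  have : ComplementedLattice (Submodule B B) := by
    refine ⟨fun I ↦ ?_⟩
    obtain ⟨π, hπ⟩ := (I.subtype.restrictScalars k).exists_leftInverse_of_injective
      (LinearMap.ker_eq_bot.mpr I.injective_subtype)
    have hπI : ∀ y : I, π y = y := fun y ↦ LinearMap.congr_fun hπ y
    let θ (m : B) : B ⊗[k] B →ₗ[k] I := TensorProduct.lift <|
      LinearMap.mk₂ k (fun a b ↦ a • π (b * m)) (fun _ _ _ ↦ add_smul _ _ _)
        (fun _ _ _ ↦ smul_assoc _ _ _) (fun _ _ _ ↦ by rw [add_mul, map_add, smul_add])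
        (fun _ _ _ ↦ by rw [smul_mul_assoc, map_smul, smul_comm])
    have hθ (m a b : B) : θ m (a ⊗ₜ b) = a • π (b * m) := rfl
    have hadd (m n : B) : θ (m + n) = θ m + θ n := by
      ext a b
      simp [hθ, mul_add]
    have hsmul (x m : B) (t : B ⊗[k] B) : θ (x * m) t = θ m (t * ((1 : B) ⊗ₜ[k] x)) := by
      induction t with
      | zero => simp
      | add u₁ u₂ h₁ h₂ => simp only [map_add, add_mul, h₁, h₂]
      | tmul a b => simp [hθ, mul_assoc]
    have hsmul' (x m : B) (t : B ⊗[k] B) : θ m ((x ⊗ₜ[k] (1 : B)) * t) = x • θ m t := by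
      induction t with
      | zero => simp
      | add u₁ u₂ h₁ h₂ => simp only [map_add, mul_add, smul_add, h₁, h₂]
      | tmul a b => simp [hθ, mul_smul]
    have hid (y : I) (t : B ⊗[k] B) : θ y t = LinearMap.mul' k B t • y := by
      induction t with
      | zero => simp
      | add u₁ u₂ h₁ h₂ => simp only [map_add, add_smul, h₁, h₂]
      | tmul a b =>
        rw [hθ, ← smul_eq_mul b, ← Submodule.coe_smul, hπI, LinearMap.mul'_apply, mul_smul]
    let φ : B →ₗ[B] I :=
      { toFun := fun m ↦ θ m e
        map_add' := fun m n ↦ by rw [hadd, LinearMap.add_apply]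
        map_smul' := fun x m ↦ by
          rw [smul_eq_mul, hsmul, ← he, hsmul', RingHom.id_apply] }
    exact ⟨LinearMap.ker φ, LinearMap.isCompl_of_proj (f := φ) fun y ↦ by
      change θ y e = y
      rw [hid, he1, one_smul]⟩
  exact { }

/-- A subspace over a field is a linear retract. -/
lemma exists_linear_retraction (N : Submodule k A) :
    ∃ r : A →ₗ[k] N, ∀ x : N, r x = x := by
  obtain ⟨r, hr⟩ := N.subtype.exists_leftInverse_of_injective
    (LinearMap.ker_eq_bot.mpr N.injective_subtype)
  exact ⟨r, LinearMap.congr_fun hr⟩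

lemma IsLeftCoideal.lTensor_comul {N : Submodule k A} (hN : IsLeftCoideal k N)
    (r : A →ₗ[k] N) (hr : ∀ x : N, r x = x) {x : A} (hx : x ∈ N) :
    (N.subtype ∘ₗ r).lTensor A (Coalgebra.comul (R := k) x) = Coalgebra.comul (R := k) x := by
  obtain ⟨t, ht⟩ := hN x hx
  have h : (N.subtype ∘ₗ r) ∘ₗ N.subtype = N.subtype := by
    ext y; simp [hr]
  rw [← ht, LinearMap.lTensor, ← LinearMap.comp_apply, ← TensorProduct.map_comp, h,
    LinearMap.comp_id]

/-- If all slices of `Δ(x)` lie in `N` for all `x ∈ N`, then `N` is a left coideal. -/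
lemma isLeftCoideal_of_forall_slice {N : Submodule k A}
    (h : ∀ x ∈ N, ∀ μ : A →ₗ[k] k,
      TensorProduct.lid k A (μ.rTensor A (Coalgebra.comul (R := k) x)) ∈ N) :
    IsLeftCoideal k N := by
  intro x hx
  let b := Module.Basis.ofVectorSpace k A
  have ht (t : A ⊗[k] A) (ht : ∀ μ : A →ₗ[k] k, TensorProduct.lid k A (μ.rTensor A t) ∈ N) :
      t ∈ LinearMap.range (TensorProduct.map (LinearMap.id : A →ₗ[k] A) N.subtype) := by
    obtain ⟨c, rfl⟩ := TensorProduct.eq_repr_basis_left b t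
    refine Submodule.sum_mem _ fun i hi ↦ ?_
    have := ht (b.coord i)
    have hci : c i ∈ N := by
      rw [Finsupp.sum, map_sum, map_sum, Finset.sum_eq_single_of_mem i hi] at this
      · simpa using this
      · intro j _ hj
        simp [Finsupp.single_eq_of_ne hj.symm]
    exact ⟨b i ⊗ₜ ⟨c i, hci⟩, by simp⟩
  exact ht _ (h x hx)

variable (k) in
/-- The left coideal subalgebra `N_P`. -/
def NPSubalgebra (P : A) : Subalgebra k A where
  carrier := NPSet k P
  mul_mem' := by
    rintro x y ⟨hx, hx'⟩ ⟨hy, hy'⟩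
    simp only [NPlSet, NPrSet, Set.mem_ofPred_eq] at hx hx' hy hy'
    have hxP : x ⊗ₜ[k] P = (x ⊗ₜ[k] (1 : A)) * ((1 : A) ⊗ₜ[k] P) := by simp
    have hyP : y ⊗ₜ[k] P = ((1 : A) ⊗ₜ[k] P) * (y ⊗ₜ[k] (1 : A)) := by simp
    refine ⟨?_, ?_⟩ <;> simp only [NPlSet, NPrSet, Set.mem_ofPred_eq, Bialgebra.comul_mul]
    · rw [← mul_assoc, hx, hxP, mul_assoc, hy]; simp
    · rw [mul_assoc, hy', hyP, ← mul_assoc, hx']; simp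
  add_mem' := by
    rintro x y ⟨hx, hx'⟩ ⟨hy, hy'⟩
    simp only [NPlSet, NPrSet, Set.mem_ofPred_eq] at hx hx' hy hy'
    refine ⟨?_, ?_⟩ <;> simp only [NPlSet, NPrSet, Set.mem_ofPred_eq, map_add, mul_add, add_mul,
      TensorProduct.add_tmul, hx, hx', hy, hy']
  algebraMap_mem' r := by
    refine ⟨?_, ?_⟩ <;> simp [NPlSet, NPrSet, Algebra.algebraMap_eq_smul_one,
      Algebra.TensorProduct.one_def, TensorProduct.smul_tmul']

lemma mem_NPSubalgebra {P x : A} :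
    x ∈ NPSubalgebra k P ↔ x ∈ NPlSet k P ∧ x ∈ NPrSet k P :=
  Iff.rfl

/-- `N_P` is a left coideal. -/
lemma isLeftCoidealSubalgebra_NPSubalgebra (P : A) :
    IsLeftCoidealSubalgebra k (NPSubalgebra k P) := by
  refine isLeftCoideal_of_forall_slice fun x hx μ ↦ ?_
  obtain ⟨hx, hx'⟩ := hx
  set s : (A ⊗[k] A) ⊗[k] A →ₗ[k] A ⊗[k] A :=
    ((TensorProduct.lid k A).toLinearMap ∘ₗ μ.rTensor A).rTensor A with hs
  have hcomul : Coalgebra.comul (R := k)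
      (TensorProduct.lid k A (μ.rTensor A (Coalgebra.comul (R := k) x))) =
      s (Coalgebra.comul.rTensor A (Coalgebra.comul (R := k) x)) := by
    have : Coalgebra.comul ∘ₗ (TensorProduct.lid k A).toLinearMap ∘ₗ μ.rTensor A =
        s ∘ₗ (TensorProduct.assoc k A A A).symm.toLinearMap ∘ₗ
          (Coalgebra.comul (R := k) (A := A)).lTensor A := by
      have h₂ (a : A) (t : A ⊗[k] A) : μ a • t =
          s ((TensorProduct.assoc k A A A).symm (a ⊗ₜ[k] t)) := by
        induction t with
        | zero => simp
        | add u₁ u₂ h₁ h₂ => simp only [TensorProduct.tmul_add, map_add, smul_add, h₁, h₂]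
        | tmul b c => simp [hs, TensorProduct.smul_tmul']
      ext a b
      simp [h₂]
    rw [← Coalgebra.coassoc_symm_apply]
    exact LinearMap.congr_fun this _
  have hl (t : (A ⊗[k] A) ⊗[k] A) :
      ((1 : A) ⊗ₜ[k] P) * s t = s (((1 : A ⊗[k] A) ⊗ₜ[k] P) * t) := by
    induction t with
    | zero => simp
    | add u₁ u₂ h₁ h₂ => simp only [mul_add, map_add, h₁, h₂]
    | tmul b c => simp [hs]
  have hr (t : (A ⊗[k] A) ⊗[k] A) :
      s t * ((1 : A) ⊗ₜ[k] P) = s (t * ((1 : A ⊗[k] A) ⊗ₜ[k] P)) := by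
    induction t with
    | zero => simp
    | add u₁ u₂ h₁ h₂ => simp only [add_mul, map_add, h₁, h₂]
    | tmul b c => simp [hs]
  have hΔl (t : A ⊗[k] A) : ((1 : A ⊗[k] A) ⊗ₜ[k] P) * Coalgebra.comul.rTensor A t =
      Coalgebra.comul.rTensor A (((1 : A) ⊗ₜ[k] P) * t) := by
    induction t with
    | zero => simp
    | add u₁ u₂ h₁ h₂ => simp only [mul_add, map_add, h₁, h₂]
    | tmul b c => simp
  have hΔr (t : A ⊗[k] A) : Coalgebra.comul.rTensor A t * ((1 : A ⊗[k] A) ⊗ₜ[k] P) =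
      Coalgebra.comul.rTensor A (t * ((1 : A) ⊗ₜ[k] P)) := by
    induction t with
    | zero => simp
    | add u₁ u₂ h₁ h₂ => simp only [add_mul, map_add, h₁, h₂]
    | tmul b c => simp
  refine ⟨?_, ?_⟩
  · change _ * _ = _
    rw [hcomul, hl, hΔl, show _ * _ = _ from hx]
    simp [hs]
  · change _ * _ = _
    rw [hcomul, hr, hΔr, show _ * _ = _ from hx']
    simp [hs]

/-- If `P` lies in a left coideal `N` and is fixed by the antipode, then `S(P₁) ⊗ P₂` lies in
`N ⊗ N`. -/
lemma IsLeftCoideal.map_antipode_comul {N : Submodule k A} (hN : IsLeftCoideal k N)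
    (hS : Function.Injective (HopfAlgebra.antipode k : A →ₗ[k] A))
    (r : A →ₗ[k] N) (hr : ∀ x : N, r x = x) {P : A} (hP : P ∈ N)
    (hSP : HopfAlgebra.antipode k P = P) :
    (N.subtype ∘ₗ r).lTensor A
        ((HopfAlgebra.antipode k).rTensor A (Coalgebra.comul (R := k) P)) =
        (HopfAlgebra.antipode k).rTensor A (Coalgebra.comul (R := k) P) ∧
      (N.subtype ∘ₗ r).rTensor A
        ((HopfAlgebra.antipode k).rTensor A (Coalgebra.comul (R := k) P)) =
        (HopfAlgebra.antipode k).rTensor A (Coalgebra.comul (R := k) P) := by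
  set S : A →ₗ[k] A := HopfAlgebra.antipode k with hSdef
  have hq := hN.lTensor_comul r hr hP
  set q : A →ₗ[k] A := N.subtype ∘ₗ r
  constructor
  · rw [← LinearMap.comp_apply, LinearMap.lTensor_comp_rTensor, ← LinearMap.rTensor_comp_lTensor,
      LinearMap.comp_apply, hq]
  · apply Module.Flat.lTensor_preserves_injective_linearMap (M := A) S hS
    have hΔ : TensorProduct.map S S (Coalgebra.comul (R := k) P) =
        TensorProduct.comm k A A (Coalgebra.comul (R := k) P) := by
      have h := comul_antipode k P
      rw [hSP] at h
      apply (TensorProduct.comm k A A).injective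
      rw [← h]
      simp
    have hSS (t : A ⊗[k] A) : S.lTensor A (S.rTensor A t) = TensorProduct.map S S t := by
      rw [← LinearMap.comp_apply, LinearMap.lTensor_comp_rTensor]
    have hqS (t : A ⊗[k] A) : S.lTensor A (q.rTensor A t) = q.rTensor A (S.lTensor A t) := by
      rw [← LinearMap.comp_apply, LinearMap.lTensor_comp_rTensor,
        ← LinearMap.rTensor_comp_lTensor, LinearMap.comp_apply]
    have hcomm (t : A ⊗[k] A) : q.rTensor A (TensorProduct.comm k A A t) =
        TensorProduct.comm k A A (q.lTensor A t) := by
      induction t with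
      | zero => simp
      | add u₁ u₂ h₁ h₂ => simp only [map_add, h₁, h₂]
      | tmul a b => simp
    rw [hqS, hSS, hΔ, hcomm, hq]

lemma mul_antipode_comul_eq_one {P : A} (hP : IsRightGroupLikeProjection k P) :
    LinearMap.mul' k A ((HopfAlgebra.antipode k).rTensor A (Coalgebra.comul (R := k) P)) = 1 := by
  simp [hP.counit_eq_one_s1]

/-- `N_P` is semisimple when `P` is fixed by the antipode. -/
lemma isSemisimpleRing_NPSubalgebra
    (hS : Function.Injective (HopfAlgebra.antipode k : A →ₗ[k] A)) {P : A}
    (hP : IsRightGroupLikeProjection k P) (hSP : HopfAlgebra.antipode k P = P) :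
    IsSemisimpleRing (NPSubalgebra k P) := by
  set N := NPSubalgebra k P
  have hPN : P ∈ Subalgebra.toSubmodule N := ⟨hP.2.2.2, hP.2.2.1⟩
  obtain ⟨r, hr⟩ := exists_linear_retraction (Subalgebra.toSubmodule N)
  obtain ⟨h₁, h₂⟩ := IsLeftCoideal.map_antipode_comul
    (isLeftCoidealSubalgebra_NPSubalgebra P) hS r hr hPN hSP
  set E := (HopfAlgebra.antipode k).rTensor A (Coalgebra.comul (R := k) P) with hE
  let e : N ⊗[k] N := TensorProduct.map r r E
  let j : N ⊗[k] N →ₐ[k] A ⊗[k] A := Algebra.TensorProduct.map N.val N.val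
  have hj : Function.Injective j :=
    TensorProduct.map_injective_of_flat_flat N.val.toLinearMap N.val.toLinearMap
      Subtype.val_injective Subtype.val_injective
  have hje : j e = E := by
    have : j e = TensorProduct.map ((Subalgebra.toSubmodule N).subtype ∘ₗ r)
        ((Subalgebra.toSubmodule N).subtype ∘ₗ r) E := by
      rw [TensorProduct.map_comp]; rfl
    rw [this, ← LinearMap.lTensor_comp_rTensor, LinearMap.comp_apply, h₂, h₁]
  refine isSemisimpleRing_of_casimir e (fun x ↦ hj ?_) (Subtype.val_injective ?_)
  · simp only [map_mul, hje]
    simpa [j] using tmul_one_mul_antipode_comul k x.2.1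
  · have (t : N ⊗[k] N) : (LinearMap.mul' k N t : A) = LinearMap.mul' k A (j t) := by
      induction t with
      | zero => simp
      | add u₁ u₂ h₁ h₂ => simp only [map_add, Subalgebra.coe_add, h₁, h₂]
      | tmul a b => simp [j]
    rw [this, hje, mul_antipode_comul_eq_one hP, Subalgebra.coe_one]

/-- `N_P` is contained in every left coideal subalgebra containing `P`. -/
lemma NPSubalgebra_le (hS : Function.Injective (HopfAlgebra.antipode k : A →ₗ[k] A)) {P : A}
    (hP : IsRightGroupLikeProjection k P) (hSP : HopfAlgebra.antipode k P = P)
    {N : Subalgebra k A} (hN : IsLeftCoidealSubalgebra k N) (hPN : P ∈ N) :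
    NPSubalgebra k P ≤ N := by
  intro x hx
  obtain ⟨r, hr⟩ := exists_linear_retraction (Subalgebra.toSubmodule N)
  obtain ⟨h₁, h₂⟩ := IsLeftCoideal.map_antipode_comul hN hS r hr hPN hSP
  have hcas := tmul_one_mul_antipode_comul k hx.1
  have hone := mul_antipode_comul_eq_one hP
  set E := (HopfAlgebra.antipode k).rTensor A (Coalgebra.comul (R := k) P) with hE
  have hqN (a : A) : ((Subalgebra.toSubmodule N).subtype ∘ₗ r) a ∈ N := (r a).2
  set q : A →ₗ[k] A := (Subalgebra.toSubmodule N).subtype ∘ₗ r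
  have hl (t : A ⊗[k] A) :
      q.lTensor A ((x ⊗ₜ[k] (1 : A)) * t) = (x ⊗ₜ[k] (1 : A)) * q.lTensor A t := by
    induction t with
    | zero => simp
    | add u₁ u₂ h₁ h₂ => simp only [map_add, mul_add, h₁, h₂]
    | tmul a b => simp
  have hr (t : A ⊗[k] A) :
      q.rTensor A (t * ((1 : A) ⊗ₜ[k] x)) = q.rTensor A t * ((1 : A) ⊗ₜ[k] x) := by
    induction t with
    | zero => simp
    | add u₁ u₂ h₁ h₂ => simp only [map_add, add_mul, h₁, h₂]
    | tmul a b => simp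
  have hmem (t : A ⊗[k] A) : LinearMap.mul' k A (q.lTensor A (q.rTensor A t)) ∈ N := by
    induction t with
    | zero => simp
    | add u₁ u₂ h₁ h₂ => simpa only [map_add] using add_mem h₁ h₂
    | tmul a b => simpa using mul_mem (hqN a) (hqN b)
  have hmul (t : A ⊗[k] A) :
      LinearMap.mul' k A ((x ⊗ₜ[k] (1 : A)) * t) = x * LinearMap.mul' k A t := by
    induction t with
    | zero => simp
    | add u₁ u₂ h₁ h₂ => simp only [map_add, mul_add, h₁, h₂]
    | tmul a b => simp [mul_assoc]
  have hx' := hmem (E * ((1 : A) ⊗ₜ[k] x))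
  rwa [hr, h₂, ← hcas, hl, h₁, hmul, hone, mul_one] at hx'

/-- `N_P` is stable under the square of the antipode when `P` is fixed by the antipode. -/
lemma map_antipode_sq_NPSubalgebra
    (hS : Function.Bijective (HopfAlgebra.antipode k : A →ₗ[k] A)) {P : A}
    (hSP : HopfAlgebra.antipode k P = P) :
    (Subalgebra.toSubmodule (NPSubalgebra k P)).map
      (HopfAlgebra.antipode k ∘ₗ HopfAlgebra.antipode k) =
      Subalgebra.toSubmodule (NPSubalgebra k P) := by
  set T : A →ₗ[k] A := HopfAlgebra.antipode k ∘ₗ HopfAlgebra.antipode k with hT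
  have hTbij : Function.Bijective T := hS.comp hS
  have hTP : T P = P := by simp [hT, hSP]
  have hTmul (a b : A) : T (a * b) = T a * T b := by
    simp [hT, HopfAlgebra.antipode_mul_antidistrib]
  have hTone : T 1 = 1 := by simp [hT]
  have hTΔ (x : A) : Coalgebra.comul (R := k) (T x) =
      TensorProduct.map T T (Coalgebra.comul (R := k) x) := by
    have (t : A ⊗[k] A) : TensorProduct.comm k A A (TensorProduct.map (HopfAlgebra.antipode k)
        (HopfAlgebra.antipode k) (TensorProduct.comm k A A (TensorProduct.map
          (HopfAlgebra.antipode k) (HopfAlgebra.antipode k) t))) = TensorProduct.map T T t := by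
      induction t with
      | zero => simp
      | add u₁ u₂ h₁ h₂ => simp only [map_add, h₁, h₂]
      | tmul a b => simp [hT]
    rw [← this, ← comul_antipode, ← comul_antipode]; rfl
  have hTT : Function.Injective (TensorProduct.map T T) :=
    TensorProduct.map_injective_of_flat_flat T T hTbij.1 hTbij.1
  have hTTmul (u v : A ⊗[k] A) : TensorProduct.map T T (u * v) =
      TensorProduct.map T T u * TensorProduct.map T T v := by
    induction u with
    | zero => simp
    | add u₁ u₂ h₁ h₂ => simp only [map_add, add_mul, h₁, h₂]
    | tmul a b =>
      induction v with
      | zero => simp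
      | add v₁ v₂ h₁ h₂ => simp only [map_add, mul_add, h₁, h₂]
      | tmul c d => simp [hTmul]
  have hP1 : (1 : A) ⊗ₜ[k] P = TensorProduct.map T T ((1 : A) ⊗ₜ[k] P) := by
    simp [hTone, hTP]
  have hiff (x : A) : T x ∈ NPSubalgebra k P ↔ x ∈ NPSubalgebra k P := by
    have hxP : T x ⊗ₜ[k] P = TensorProduct.map T T (x ⊗ₜ[k] P) := by simp [hTP]
    simp only [mem_NPSubalgebra, NPlSet, NPrSet, Set.mem_ofPred_eq]
    have hl : ((1 : A) ⊗ₜ[k] P) * Coalgebra.comul (T x) =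
        TensorProduct.map T T (((1 : A) ⊗ₜ[k] P) * Coalgebra.comul x) := by
      rw [hTTmul, hTΔ, ← hP1]
    have hr : Coalgebra.comul (T x) * ((1 : A) ⊗ₜ[k] P) =
        TensorProduct.map T T (Coalgebra.comul x * ((1 : A) ⊗ₜ[k] P)) := by
      rw [hTTmul, hTΔ, ← hP1]
    rw [hl, hr, hxP, hTT.eq_iff, hTT.eq_iff]
  ext y
  constructor
  · rintro ⟨x, hx, rfl⟩
    exact (hiff x).2 hx
  · intro hy
    obtain ⟨x, rfl⟩ := hTbij.2 y
    exact ⟨x, (hiff x).1 hy, rfl⟩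

/-- A semisimple augmented algebra has a left integral of augmentation one. -/
lemma exists_left_integral {B : Type*} [Ring B] [Algebra k B] [IsSemisimpleRing B]
    (ε : B →ₐ[k] k) : ∃ p : B, ε p = 1 ∧ ∀ x, x * p = ε x • p := by
  obtain ⟨C, hC⟩ := exists_isCompl (RingHom.ker ε : Submodule B B)
  obtain ⟨a, ha, p, hp, hap⟩ := Submodule.mem_sup.mp
    (hC.sup_eq_top ▸ Submodule.mem_top : (1 : B) ∈ RingHom.ker ε ⊔ C)
  have hεp : ε p = 1 := by
    have := congrArg ε hap
    rwa [map_add, (RingHom.mem_ker).mp ha, zero_add, map_one] at this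
  refine ⟨p, hεp, fun x ↦ ?_⟩
  have hmem : (x - algebraMap k B (ε x)) * p ∈ (RingHom.ker ε : Submodule B B) ⊓ C :=
    ⟨by simp [RingHom.mem_ker], C.smul_mem _ hp⟩
  rw [hC.inf_eq_bot, Submodule.mem_bot, sub_mul, sub_eq_zero] at hmem
  rw [hmem, Algebra.smul_def]

/-- A semisimple augmented algebra has a two-sided integral of augmentation one. -/
lemma exists_integral {B : Type*} [Ring B] [Algebra k B] [IsSemisimpleRing B]
    (ε : B →ₐ[k] k) : ∃ p : B, ε p = 1 ∧ (∀ x, x * p = ε x • p) ∧ ∀ x, p * x = ε x • p := by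
  obtain ⟨p, hp, hp'⟩ := exists_left_integral ε
  obtain ⟨q, hq, hq'⟩ := exists_left_integral (B := Bᵐᵒᵖ)
    ((AlgHom.fromOpposite ε fun _ _ ↦ Commute.all _ _))
  have hq'' (x : B) : q.unop * x = ε x • q.unop := congrArg MulOpposite.unop (hq' (.op x))
  have hqp : q.unop = p := by
    have h₁ := hp' q.unop
    rw [hq'', hp, show ε q.unop = 1 from hq, one_smul, one_smul] at h₁
    exact h₁
  exact ⟨p, hp, hp', fun x ↦ hqp ▸ hq'' x⟩

/-- An integral of a left coideal subalgebra `N` satisfies `N ⊆ N_P`. -/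
lemma IsLeftCoidealSubalgebra.le_NPSubalgebra {N : Subalgebra k A}
    (hN : IsLeftCoidealSubalgebra k N) {P : A}
    (hl : ∀ x ∈ N, x * P = Coalgebra.counit (R := k) x • P)
    (hr : ∀ x ∈ N, P * x = Coalgebra.counit (R := k) x • P) : N ≤ NPSubalgebra k P := by
  intro x hx
  obtain ⟨t, ht⟩ := hN x hx
  have hc := counitRight_comul k x
  rw [← ht] at hc
  refine ⟨?_, ?_⟩
  · change _ * _ = _
    rw [← ht, ← hc]
    clear ht hc
    induction t with
    | zero => simp
    | add u₁ u₂ h₁ h₂ => simp only [map_add, mul_add, TensorProduct.add_tmul, h₁, h₂]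
    | tmul a b => simp [hr b b.2, TensorProduct.smul_tmul]
  · change _ * _ = _
    rw [← ht, ← hc]
    clear ht hc
    induction t with
    | zero => simp
    | add u₁ u₂ h₁ h₂ => simp only [map_add, add_mul, TensorProduct.add_tmul, h₁, h₂]
    | tmul a b => simp [hl b b.2, TensorProduct.smul_tmul]

/-- Every semisimple left coideal subalgebra stable under `S²` is of the form `N_P`. -/
lemma exists_NPSubalgebra_eq
    (hS : Function.Bijective (HopfAlgebra.antipode k : A →ₗ[k] A)) {N : Subalgebra k A}
    (hN : IsLeftCoidealSubalgebra k N) [IsSemisimpleRing N]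
    (hN2 : (Subalgebra.toSubmodule N).map (HopfAlgebra.antipode k ∘ₗ HopfAlgebra.antipode k) =
      Subalgebra.toSubmodule N) :
    ∃ P : A, IsTwoSidedGroupLikeProjection k P ∧ NPSubalgebra k P = N := by
  obtain ⟨p, hp, hpl, hpr⟩ := exists_integral ((Bialgebra.counitAlgHom k A).comp N.val)
  obtain ⟨P, hPN⟩ := p
  replace hp : Coalgebra.counit (R := k) P = 1 := hp
  have hl (x : A) (hx : x ∈ N) : x * P = Coalgebra.counit (R := k) x • P :=
    congrArg Subtype.val (hpl ⟨x, hx⟩)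
  have hr (x : A) (hx : x ∈ N) : P * x = Coalgebra.counit (R := k) x • P :=
    congrArg Subtype.val (hpr ⟨x, hx⟩)
  have hle := hN.le_NPSubalgebra hl hr
  have hP : IsRightGroupLikeProjection k P :=
    ⟨fun h ↦ by simp [h] at hp, by rw [hl P hPN, hp, one_smul], (hle hPN).2, (hle hPN).1⟩
  have hSS : HopfAlgebra.antipode k (HopfAlgebra.antipode k P) = P := by
    have hmem : HopfAlgebra.antipode k (HopfAlgebra.antipode k P) ∈ N :=
      hN2.le (Submodule.mem_map_of_mem (f := HopfAlgebra.antipode k ∘ₗ HopfAlgebra.antipode k) hPN)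
    obtain ⟨Q, hQ, hQP⟩ := hN2.ge hPN
    have h₁ : HopfAlgebra.antipode k (HopfAlgebra.antipode k P) * P = P := by
      rw [hl _ hmem]; simp [hp]
    have h₂ := congrArg (HopfAlgebra.antipode k ∘ₗ HopfAlgebra.antipode k) (hr Q hQ)
    have hεQ : Coalgebra.counit (R := k) Q = 1 := by
      rw [← hp, ← hQP]; simp
    rw [hεQ, one_smul] at h₂
    simp only [LinearMap.comp_apply, HopfAlgebra.antipode_mul_antidistrib] at h₂ hQP
    rw [hQP, h₁] at h₂
    exact h₂.symm
  have hSP : HopfAlgebra.antipode k P = P := by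
    have h := congrArg (HopfAlgebra.antipode k) hP.mul_antipode
    rw [HopfAlgebra.antipode_mul_antidistrib, hSS, hP.mul_antipode] at h
    exact h
  exact ⟨P, hP.isTwoSided hSP, le_antisymm (NPSubalgebra_le hS.1 hP hSP hN hPN) hle⟩

variable (k) in
lemma NPSubalgebra_injOn : Set.InjOn (NPSubalgebra k : A → _)
    {P | IsTwoSidedGroupLikeProjection k P} := by
  intro P hP Q hQ h
  have hPN : P ∈ NPSubalgebra k P := ⟨hP.1.2.2.2, hP.1.2.2.1⟩
  have hQN : Q ∈ NPSubalgebra k Q := ⟨hQ.1.2.2.2, hQ.1.2.2.1⟩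
  have h₁ := mul_eq_counit_smul_of_mem_NPrSet (h ▸ hPN : P ∈ NPSubalgebra k Q).2
  have h₂ := mul_eq_counit_smul_of_mem_NPlSet (h.symm ▸ hQN : Q ∈ NPSubalgebra k P).1
  rw [hP.1.counit_eq_one_s1, one_smul] at h₁
  rw [hQ.1.counit_eq_one_s1, one_smul] at h₂
  exact h₂.symm.trans h₁

variable (k)

/-- Theorem: `P ↦ N_P` is a bijection between the set of two-sided group-like projections
in `A` and the set of semisimple left coideal subalgebras `N ⊆ A` with `S²(N) = N`. -/
theorem statement1
    (hS : Function.Bijective (HopfAlgebra.antipode (R := k) : A →ₗ[k] A)) :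
    ∃ e : {P : A // IsTwoSidedGroupLikeProjection k P} ≃
        {N : Subalgebra k A // IsLeftCoidealSubalgebra k N ∧ IsSemisimpleRing N ∧
          (Subalgebra.toSubmodule N).map
            (HopfAlgebra.antipode (R := k) ∘ₗ HopfAlgebra.antipode (R := k)) =
            Subalgebra.toSubmodule N},
      ∀ P : {P : A // IsTwoSidedGroupLikeProjection k P},
        (((e P).1 : Subalgebra k A) : Set A) = NPSet k (P.1) := by
  refine ⟨Equiv.ofBijective (fun P ↦ ⟨NPSubalgebra k P.1,
    isLeftCoidealSubalgebra_NPSubalgebra P.1,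
    isSemisimpleRing_NPSubalgebra hS.1 P.2.1 P.2.antipode_eq,
    map_antipode_sq_NPSubalgebra hS P.2.antipode_eq⟩) ⟨?_, ?_⟩, fun P ↦ rfl⟩
  · intro P Q h
    exact Subtype.ext (NPSubalgebra_injOn k P.2 Q.2 (congrArg Subtype.val h))
  · rintro ⟨N, hN, _, hN2⟩
    obtain ⟨P, hP, rfl⟩ := exists_NPSubalgebra_eq hS hN hN2
    exact ⟨⟨P, hP⟩, rfl⟩
end
end
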